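/- For every ε > 0 there exists N ∈ ℕ such that for every connected simple graph G on n ≥ N vertices in which every block has maximum degree at most 3, and all vertices s,t of G, the graph G has a walk from s to t visiting every vertex of G of length at most (3/2 + ε) · OLP(G,s,t). -/

import Mathlib

open SimpleGraph

/-- The value `Σ_{e ∈ E} x e` of an assignment `x` on the edges of `G`. -/
noncomputable def hkValue {V : Type*} (G : SimpleGraph V) (x : Sym2 V → ℝ) : ℝ :=
  ∑ᶠ e ∈ G.edgeSet, x e

/-- The total weight `Σ_{e ∈ δ(S)} x e` of the edges of `G` crossing the cut `(S, Sᶜ)`. -/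
noncomputable def hkCut {V : Type*} (G : SimpleGraph V) (x : Sym2 V → ℝ)
    (S : Set V) : ℝ :=
  ∑ᶠ e ∈ {e ∈ G.edgeSet | ∃ a b, e = s(a, b) ∧ a ∈ S ∧ b ∉ S}, x e

/-- Feasibility for the Held-Karp path relaxation of graph-TSPP on `(G, s, t)`. -/
def HKPathFeasible {V : Type*} (G : SimpleGraph V) (s t : V) (x : Sym2 V → ℝ) : Prop :=
  (∀ e, 0 ≤ x e) ∧
  ∀ S : Set V, S.Nonempty → S ≠ Set.univ →
    ((s ∈ S ↔ t ∈ S) → 2 ≤ hkCut G x S) ∧ (¬(s ∈ S ↔ t ∈ S) → 1 ≤ hkCut G x S)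

/-- The optimum value `OLP(G, s, t)` of the Held-Karp path relaxation on `(G, s, t)`. -/
noncomputable def OLPpath {V : Type*} [Fintype V] (G : SimpleGraph V) (s t : V) : ℝ :=
  sInf {y | ∃ x, HKPathFeasible G s t x ∧ y = hkValue G x}

/-- A block of a graph `G`: a maximal vertex set inducing a connected subgraph
without a cut vertex. -/
def IsBlock {V : Type*} (G : SimpleGraph V) (B : Set V) : Prop :=
  (G.induce B).Connected ∧
  (∀ v ∈ B, (G.induce (B \ {v})).Preconnected) ∧
  ∀ B' : Set V, B ⊆ B' → (G.induce B').Connected →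
    (∀ v ∈ B', (G.induce (B' \ {v})).Preconnected) → B' = B

/-!
The bound `3 / 2 * OLPpath G s t` holds for every connected graph, by an argument of Gao. Call a cut
narrow if the Held-Karp solution `x` gives it weight less than `2`; narrow cuts separate `s` from
`t`, and their sides containing `s` form a chain. One can grow a spanning tree `F` crossing each
narrow cut exactly once. Let `T` be the set of vertices whose degree in `F` has the wrong parity for
a trail from `s` to `t`. A cut separating an odd part of `T` is not narrow, so `x / 2` is a
fractional `T`-join, and by Edmonds and Johnson there is a `T`-join `J` with at most half as many
edges as the value of `x`. The disjoint union of `F` and `J` has an Eulerian trail from `s` to `t`,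
and `F` has at most as many edges as the value of `x`.

The theorem of Edmonds and Johnson follows, by subdividing every edge, from its sharper bipartite
form, due to Seymour. The latter is proved by Sebő's method: there is a vertex `t` of `T` at which
every `T`-join can be replaced by one that has at most one edge at `t` and no more edges elsewhere.
Contracting the star of such a vertex lowers the minimum size of a `T`-join by at most one and the
fractional weight by at least one.
-/

/-- A multigraph on the vertices `V` with edges `E`, loops and parallel edges allowed. Each edge is
given an arbitrary orientation, which none of the notions below depend on: storing the ends as two
functions makes identifying vertices a composition. -/
structure Multigraph (V E : Type*) where
  src : E → V
  tgt : E → V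

namespace Multigraph

open Finset

section Boundary

variable {V E : Type*} [DecidableEq V] (H : Multigraph V E)

/-- The vertex `v` as a `0`-chain modulo 2. -/
def point (v : V) : V → ZMod 2 := Pi.single v 1

/-- The boundary modulo 2 of an edge set, sending each vertex to the parity of its degree. An edge
set `J` is a `T`-join when `H.boundary J = T`, the vertex set `T` being given by its indicator. -/
def boundary (J : Finset E) : V → ZMod 2 := ∑ e ∈ J, (point (H.src e) + point (H.tgt e))

/-- The edges of `M` with exactly one end in `S`. -/
def cut (M : Finset E) (S : Finset V) : Finset E := {e ∈ M | ¬(H.src e ∈ S ↔ H.tgt e ∈ S)}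

/-- The edge `e` has `t` as an end. -/
def Inc (t : V) (e : E) : Prop := H.src e = t ∨ H.tgt e = t

instance (t : V) : DecidablePred (H.Inc t) := fun _ => instDecidableOr

/-- The end of `e` other than `t`, for an edge `e` incident to `t`. -/
def other (t : V) (e : E) : V := if H.src e = t then H.tgt e else H.src e

variable {H}

lemma mem_cut {M : Finset E} {S : Finset V} {e : E} :
    e ∈ H.cut M S ↔ e ∈ M ∧ ¬(H.src e ∈ S ↔ H.tgt e ∈ S) := mem_filter

lemma Inc.src_tgt_eq {t : V} {e : E} (h : H.Inc t e) :
    H.src e = t ∧ H.tgt e = H.other t e ∨ H.src e = H.other t e ∧ H.tgt e = t := by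
  unfold other
  split_ifs with hsrc
  · exact .inl ⟨hsrc, rfl⟩
  · exact .inr ⟨rfl, h.resolve_left hsrc⟩

lemma Inc.mem_cut_iff {M : Finset E} {S : Finset V} {t : V} {e : E} (h : H.Inc t e) :
    e ∈ H.cut M S ↔ e ∈ M ∧ ¬(t ∈ S ↔ H.other t e ∈ S) := by
  rw [mem_cut]
  rcases h.src_tgt_eq with ⟨h₁, h₂⟩ | ⟨h₁, h₂⟩
  · rw [← h₁, h₂, h₁]
  · rw [h₁, h₂, Iff.comm (a := t ∈ S)]

lemma exists_inc_other_notMem {M : Finset E} {S : Finset V} {e : E} (he : e ∈ H.cut M S) :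
    ∃ t ∈ S, H.Inc t e ∧ H.other t e ∉ S := by
  have hends := (mem_cut.1 he).2
  have hsrc : H.Inc (H.src e) e := .inl rfl
  have htgt : H.Inc (H.tgt e) e := .inr rfl
  by_cases h : H.src e ∈ S
  · exact ⟨_, h, hsrc, fun h' => (hsrc.mem_cut_iff.1 he).2 (iff_of_true h h')⟩
  · have h : H.tgt e ∈ S := by tauto
    exact ⟨_, h, htgt, fun h' => (htgt.mem_cut_iff.1 he).2 (iff_of_true h h')⟩

lemma cut_insert [DecidableEq E] [Fintype E] (M : Finset E) (S : Finset V) (e : E) :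
    H.cut (insert e M) S = if e ∈ H.cut univ S then insert e (H.cut M S) else H.cut M S := by
  simp only [cut, filter_insert, mem_filter_univ]

lemma cut_eq_empty_iff {M : Finset E} {S : Finset V} :
    H.cut M S = ∅ ↔ ∀ e ∈ M, (H.src e ∈ S ↔ H.tgt e ∈ S) := by
  simp only [cut, filter_eq_empty_iff, not_not]

@[simp]
lemma cut_compl [Fintype V] {M : Finset E} (S : Finset V) : H.cut M Sᶜ = H.cut M S := by
  simp only [cut, mem_compl, not_iff_not]

lemma cut_singleton_eq_empty {M : Finset E} {t : V} (hM : ∀ e ∈ M, ¬H.Inc t e) :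
    H.cut M {t} = ∅ := by
  refine cut_eq_empty_iff.2 fun e he => ?_
  have := hM e he
  simp only [Inc, not_or] at this
  simp [this]

lemma Inc.point_add_point {t : V} {e : E} (h : H.Inc t e) :
    point (H.src e) + point (H.tgt e) = point t + point (H.other t e) := by
  rcases h.src_tgt_eq with ⟨h₁, h₂⟩ | ⟨h₁, h₂⟩
  · rw [h₁, h₂]
  · rw [h₁, h₂, add_comm]

lemma sum_point (S : Finset V) (p : V) : ∑ v ∈ S, point p v = if p ∈ S then 1 else 0 := by
  simp [point, Pi.single_apply]

lemma sum_boundary (J : Finset E) (S : Finset V) :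
    ∑ v ∈ S, H.boundary J v = (#(H.cut J S) : ZMod 2) := by
  simp only [boundary, Finset.sum_apply, Pi.add_apply]
  rw [sum_comm, cut, card_filter, Nat.cast_sum]
  refine sum_congr rfl fun e _ => ?_
  rw [sum_add_distrib, sum_point, sum_point]
  by_cases hs : H.src e ∈ S <;> by_cases ht : H.tgt e ∈ S <;>
    simp [hs, ht, CharTwo.add_self_eq_zero]

lemma sum_boundary_eq_zero {J : Finset E} {S : Finset V} (hS : H.cut J S = ∅) :
    ∑ v ∈ S, H.boundary J v = 0 := by
  rw [sum_boundary, hS, card_empty, Nat.cast_zero]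

lemma sum_univ_boundary [Fintype V] (J : Finset E) : ∑ v, H.boundary J v = 0 :=
  sum_boundary_eq_zero (cut_eq_empty_iff.2 fun e _ => by simp)

lemma boundary_apply_eq_zero {J : Finset E} {t : V} (hJ : ∀ e ∈ J, ¬H.Inc t e) :
    H.boundary J t = 0 := by
  simpa using sum_boundary_eq_zero (cut_singleton_eq_empty hJ)

@[simp]
lemma boundary_empty : H.boundary (∅ : Finset E) = 0 := sum_empty

@[simp]
lemma boundary_singleton (e : E) :
    H.boundary {e} = point (H.src e) + point (H.tgt e) := sum_singleton ..

variable [DecidableEq E]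

lemma boundary_union {J K : Finset E} (h : Disjoint J K) :
    H.boundary (J ∪ K) = H.boundary J + H.boundary K := sum_union h

lemma boundary_symmDiff (J K : Finset E) :
    H.boundary (symmDiff J K) = H.boundary J + H.boundary K := by
  have hJ := boundary_union (H := H) (disjoint_sdiff_inter J K)
  have hK := boundary_union (H := H) (disjoint_sdiff_inter K J)
  rw [sdiff_union_inter] at hJ hK
  rw [symmDiff_def, sup_eq_union, boundary_union disjoint_sdiff_sdiff, hJ, hK, inter_comm K J]
  linear_combination -ZModModule.add_self (H.boundary (J ∩ K))

lemma boundary_erase {J : Finset E} {e : E} (he : e ∈ J) :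
    H.boundary (J.erase e) = H.boundary J + (point (H.src e) + point (H.tgt e)) := by
  rw [boundary, boundary, ← add_sum_erase J _ he]
  linear_combination -ZModModule.add_self (point (H.src e) + point (H.tgt e))

end Boundary

section Connectivity

variable {V E : Type*} (H : Multigraph V E)

/-- The simple graph in which two distinct vertices are adjacent when an edge of `M` joins them. -/
def graph (M : Finset E) : SimpleGraph V :=
  SimpleGraph.fromRel fun x y => ∃ e ∈ M, H.src e = x ∧ H.tgt e = y

variable {H} {M : Finset E}

lemma graph_mono {N : Finset E} (h : M ⊆ N) : H.graph M ≤ H.graph N := by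
  intro x y hxy
  simp only [graph, fromRel_adj] at hxy ⊢
  exact ⟨hxy.1, hxy.2.imp (fun ⟨e, he, hxy⟩ => ⟨e, h he, hxy⟩) fun ⟨e, he, hxy⟩ => ⟨e, h he, hxy⟩⟩

lemma reachable_src_tgt {e : E} (he : e ∈ M) :
    (H.graph M).Reachable (H.src e) (H.tgt e) := by
  by_cases h : H.src e = H.tgt e
  · rw [h]
  · exact Adj.reachable ((fromRel_adj ..).2 ⟨h, .inl ⟨e, he, rfl, rfl⟩⟩)

variable (H M) in
open Classical in
/-- The connected component of `v` in the graph with edge set `M`. -/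
noncomputable def component [Fintype V] (v : V) : Finset V := {x | (H.graph M).Reachable v x}

lemma mem_component [Fintype V] {v x : V} :
    x ∈ H.component M v ↔ (H.graph M).Reachable v x := by
  simp only [component, mem_filter_univ]

variable [DecidableEq V]

lemma cut_component [Fintype V] (v : V) : H.cut M (H.component M v) = ∅ := by
  refine cut_eq_empty_iff.2 fun e he => ?_
  simp only [mem_component]
  exact ⟨fun h => h.trans (reachable_src_tgt he), fun h => h.trans (reachable_src_tgt he).symm⟩

lemma Inc.reachable_other {t : V} {e : E} (h : H.Inc t e) (he : e ∈ M) :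
    (H.graph M).Reachable t (H.other t e) := by
  rcases h.src_tgt_eq with ⟨h₁, h₂⟩ | ⟨h₁, h₂⟩
  · simpa only [h₁, h₂] using reachable_src_tgt (H := H) he
  · simpa only [h₁, h₂] using (reachable_src_tgt (H := H) he).symm

lemma reachable_induction {P : V → Prop} {x y : V}
    (hxy : (H.graph M).Reachable x y) (hx : P x)
    (hstep : ∀ e ∈ M, ∀ v, H.Inc v e → P v → P (H.other v e)) : P y := by
  obtain ⟨w⟩ := hxy
  induction w with
  | nil => exact hx
  | @cons a b _ hadj _ ih =>
    refine ih ?_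
    obtain ⟨hab, ⟨e, he, rfl, rfl⟩ | ⟨e, he, rfl, rfl⟩⟩ := (fromRel_adj ..).1 hadj
    · simpa [other] using hstep e he _ (.inl rfl) hx
    · simpa [other, hab.symm] using hstep e he _ (.inr rfl) hx

lemma exists_boundary_eq_point_add_point {x y : V} (h : (H.graph M).Reachable x y) :
    ∃ F ⊆ M, H.boundary F = point x + point y := by
  classical
  refine reachable_induction (P := fun v => ∃ F ⊆ M, H.boundary F = point x + point v) h
    ⟨∅, empty_subset _, ?_⟩ ?_
  · rw [boundary_empty, ZModModule.add_self]
  · rintro e he v hv ⟨F, hFM, hF⟩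
    refine ⟨symmDiff F {e}, ?_, ?_⟩
    · exact symmDiff_le_sup.trans (union_subset hFM (singleton_subset_iff.2 he))
    · rw [boundary_symmDiff, hF, boundary_singleton, hv.point_add_point]
      linear_combination ZModModule.add_self (point v)

lemma mem_iff_mem_of_reachable {S : Finset V} (hS : H.cut M S = ∅) {x y : V}
    (h : (H.graph M).Reachable x y) : x ∈ S ↔ y ∈ S := by
  refine reachable_induction (P := fun v => x ∈ S ↔ v ∈ S) h Iff.rfl
    fun e he v hv hxv => hxv.trans ?_
  by_contra hve
  simpa only [hS, notMem_empty] using hv.mem_cut_iff.2 ⟨he, hve⟩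

/-- The `T`-join is assembled from one path to `t` for each vertex of `T`. -/
lemma exists_boundary_eq [Fintype V] {T : V → ZMod 2} {t : V} (hsum : ∑ v, T v = 0)
    (hT : ∀ v, T v ≠ 0 → (H.graph M).Reachable v t) : ∃ J ⊆ M, H.boundary J = T := by
  classical
  have hspan : T = ∑ v, T v • (point v + point t) := by
    simp only [smul_add, sum_add_distrib]
    rw [← sum_smul, hsum, zero_smul, add_zero]
    simp only [point, ← Pi.single_smul, smul_eq_mul, mul_one, univ_sum_single]
  have hpartial : ∀ s : Finset V, ∃ J ⊆ M, H.boundary J = ∑ v ∈ s, T v • (point v + point t) := by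
    intro s
    induction s using Finset.induction_on with
    | empty => exact ⟨∅, empty_subset _, boundary_empty⟩
    | insert v s hv ih =>
      obtain ⟨J, hJM, hJ⟩ := ih
      rw [sum_insert hv]
      by_cases hv0 : T v = 0
      · exact ⟨J, hJM, by rw [hJ, hv0, zero_smul, zero_add]⟩
      have hv1 : T v = 1 := Fin.eq_one_of_ne_zero _ hv0
      obtain ⟨P, hPM, hP⟩ := exists_boundary_eq_point_add_point (hT v hv0)
      exact ⟨symmDiff P J, symmDiff_le_sup.trans (union_subset hPM hJM),
        by rw [boundary_symmDiff, hP, hJ, hv1, one_smul]⟩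
  rw [hspan]
  exact hpartial univ

end Connectivity

section Bipartite

variable {V E : Type*} [DecidableEq V] {H : Multigraph V E}

/-- A colouring of the vertices with two colours in which the ends of every edge differ. -/
def IsBicoloring (H : Multigraph V E) (c : V → Bool) : Prop := ∀ e, c (H.src e) ≠ c (H.tgt e)

/-- `J` is a `T`-join with the fewest edges. -/
structure IsMinTJoin (H : Multigraph V E) (T : V → ZMod 2) (J : Finset E) : Prop where
  boundary_eq : H.boundary J = T
  card_le : ∀ K, H.boundary K = T → #J ≤ #K

/-- Among the edge sets that are `(U △ {x})`-joins for some vertex `x`, the set `J` is a smallest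
one, and it is a `(U △ {t})`-join. -/
structure IsMinNearJoin (H : Multigraph V E) (U : V → ZMod 2) (J : Finset E) (t : V) : Prop where
  boundary_eq : H.boundary J = U + point t
  card_le : ∀ K x, H.boundary K = U + point x → #J ≤ #K

lemma exists_isMinTJoin {J : Finset E} {T : V → ZMod 2} (hJ : H.boundary J = T) :
    ∃ J, H.IsMinTJoin T J := by
  obtain ⟨K, hK, hmin⟩ := exists_minimalFor_of_wellFoundedLT (H.boundary · = T) card ⟨J, hJ⟩
  exact ⟨K, hK, fun L hL => (le_total #K #L).elim id (hmin hL)⟩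

lemma exists_isMinNearJoin {J : Finset E} {U : V → ZMod 2} {x : V}
    (hJ : H.boundary J = U + point x) : ∃ J t, H.IsMinNearJoin U J t := by
  obtain ⟨K, ⟨t, hK⟩, hmin⟩ := exists_minimalFor_of_wellFoundedLT
    (fun K => ∃ x, H.boundary K = U + point x) card ⟨J, x, hJ⟩
  exact ⟨K, t, hK, fun L y hL => (le_total #K #L).elim id (hmin ⟨y, hL⟩)⟩

section Reachable

variable [Finite V] {M D : Finset E} {t p : V}

/-- Otherwise the component of `other t e` would contain exactly one odd vertex of `M`. -/
lemma reachable_or_exists_reachable_other (hM : ∀ f ∈ M, ¬H.Inc t f) (hD : ∀ f ∈ D, H.Inc t f)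
    (hMD : H.boundary M + H.boundary D = point p + point t) {e : E} (he : e ∈ D)
    (het : H.other t e ≠ t) :
    (H.graph M).Reachable (H.other t e) p ∨
      ∃ e' ∈ D, e ≠ e' ∧ (H.graph M).Reachable (H.other t e) (H.other t e') := by
  cases nonempty_fintype V
  simp only [← mem_component]
  set A := H.component M (H.other t e)
  have htA : t ∉ A := fun h => het <| mem_singleton.1 <|
    (mem_iff_mem_of_reachable (cut_singleton_eq_empty hM) (mem_component.1 h)).2
      (mem_singleton_self t)
  by_contra! ⟨hp, hother⟩
  have hMA : H.cut M A = ∅ := cut_component _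
  have hDA : H.cut D A = {e} := by
    ext f
    rw [mem_singleton]
    constructor
    · intro hf
      have hfD : f ∈ D := (mem_cut.1 hf).1
      by_contra hne
      exact ((hD f hfD).mem_cut_iff.1 hf).2 (iff_of_false htA (hother f hfD (Ne.symm hne)))
    · rintro rfl
      have heA : H.other t f ∈ A := mem_component.2 (Reachable.refl _)
      exact (hD f he).mem_cut_iff.2 ⟨he, fun h => htA (h.2 heA)⟩
  have hsum := congrArg (fun T => ∑ v ∈ A, T v) hMD
  simp only [Pi.add_apply, sum_add_distrib, sum_point, if_neg hp, if_neg htA, sum_boundary,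
    hMA, hDA, card_empty, card_singleton] at hsum
  simp at hsum

lemma exists_ne_reachable_other (hM : ∀ f ∈ M, ¬H.Inc t f)
    (hD : ∀ f ∈ D, H.Inc t f ∧ H.other t f ≠ t)
    (hMD : H.boundary M + H.boundary D = point p + point t) (hcard : 1 < #D) :
    ∃ e ∈ D, ∃ e' ∈ D, e ≠ e' ∧ (H.graph M).Reachable (H.other t e) (H.other t e') := by
  have hor {e} (he : e ∈ D) := reachable_or_exists_reachable_other hM (fun f hf => (hD f hf).1) hMD
    he (hD e he).2
  obtain ⟨e, he, e', he', hne⟩ := one_lt_card.1 hcard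
  rcases hor he with h | ⟨f, hf, h⟩
  · rcases hor he' with h' | ⟨f, hf, h'⟩
    · exact ⟨e, he, e', he', hne, h.trans h'.symm⟩
    · exact ⟨e', he', f, hf, h'⟩
  · exact ⟨e, he, f, hf, h⟩

end Reachable

variable {c : V → Bool} {T U : V → ZMod 2} {J L : Finset E} {p t : V}

lemma IsBicoloring.other_ne (hc : H.IsBicoloring c) {e : E} (h : H.Inc t e) :
    c (H.other t e) ≠ c t := by
  rcases h.src_tgt_eq with ⟨h₁, h₂⟩ | ⟨h₁, h₂⟩
  · simpa only [h₁, h₂] using (hc e).symm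
  · simpa only [h₁, h₂] using hc e

lemma IsBicoloring.natCast_card [Fintype V] (hc : H.IsBicoloring c) (J : Finset E) :
    (#J : ZMod 2) = ∑ v with c v = true, H.boundary J v := by
  rw [sum_boundary, cut, filter_true_of_mem]
  intro e _
  simpa only [mem_filter_univ, ← Bool.eq_iff_iff] using hc e

lemma IsBicoloring.card_ne_card [Finite V] (hc : H.IsBicoloring c) {K : Finset E} {u v : V}
    (huv : c u ≠ c v) (hJK : H.boundary J + H.boundary K = point u + point v) : #J ≠ #K := by
  cases nonempty_fintype V
  intro hcard
  have hsum : ((#J : ZMod 2) + #K) = ∑ x with c x = true, (point u + point v : V → ZMod 2) x := by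
    rw [hc.natCast_card, hc.natCast_card, ← sum_add_distrib, ← hJK]
    rfl
  simp only [Pi.add_apply, sum_add_distrib, sum_point, mem_filter_univ, hcard,
    CharTwo.add_self_eq_zero] at hsum
  cases hu : c u <;> cases hv : c v <;> simp_all

namespace IsMinNearJoin

lemma not_inc (hJ : H.IsMinNearJoin U J t) {e : E} (he : e ∈ J) : ¬H.Inc t e := by
  classical
  intro h
  refine (card_erase_lt_of_mem he).not_ge (hJ.card_le _ (H.other t e) ?_)
  rw [boundary_erase he, hJ.boundary_eq, h.point_add_point]
  linear_combination ZModModule.add_self (point t)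

lemma card_lt [Finite V] (hJ : H.IsMinNearJoin U J t) (hc : H.IsBicoloring c) {K : Finset E}
    {x : V} (hx : c x ≠ c t) (hK : H.boundary K = U + point x) : #J < #K := by
  refine (hJ.card_le K x hK).lt_of_ne (hc.card_ne_card hx.symm ?_)
  rw [hJ.boundary_eq, hK]
  linear_combination ZModModule.add_self U

/-- Otherwise `symmDiff J F` and `e` would make up a `(U △ {other t e'})`-join no larger than `J`,
which parity excludes. -/
lemma card_le_card_symmDiff [Finite V] [DecidableEq E] (hJ : H.IsMinNearJoin U J t)
    (hc : H.IsBicoloring c) {F : Finset E} {e e' : E} (he : H.Inc t e) (he' : H.Inc t e')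
    (hFt : ∀ f ∈ F, ¬H.Inc t f)
    (hF : H.boundary F = point (H.other t e) + point (H.other t e')) :
    #J ≤ #(symmDiff J F) := by
  have heJF : e ∉ symmDiff J F := fun h =>
    (mem_symmDiff.1 h).elim (fun h => hJ.not_inc h.1 he) fun h => hFt e h.1 he
  refine Nat.le_of_lt_succ ((hJ.card_lt hc (hc.other_ne he') ?_).trans_eq
    (card_insert_of_notMem heJF))
  rw [insert_eq, boundary_union (disjoint_singleton_left.2 heJF), boundary_singleton,
    he.point_add_point, boundary_symmDiff, hJ.boundary_eq, hF]
  linear_combination ZModModule.add_self (point t) + ZModModule.add_self (point (H.other t e))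

end IsMinNearJoin

lemma card_symmDiff_add_card_symmDiff {α : Type*} [DecidableEq α] {A B F : Finset α}
    (hF : F ⊆ symmDiff A B) : #(symmDiff A F) + #(symmDiff B F) = #A + #B := by
  have hmem {a} := @hF a
  simp only [mem_symmDiff] at hmem
  have hunion : symmDiff A F ∪ symmDiff B F = A ∪ B := by
    ext a
    simp only [mem_union, mem_symmDiff]
    grind
  have hinter : symmDiff A F ∩ symmDiff B F = A ∩ B := by
    ext a
    simp only [mem_inter, mem_symmDiff]
    grind
  rw [← card_union_add_card_inter, hunion, hinter, card_union_add_card_inter]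

lemma boundary_filter_add_boundary_filter_not (L : Finset E) (P : E → Prop) [DecidablePred P] :
    H.boundary {e ∈ L | P e} + H.boundary {e ∈ L | ¬P e} = H.boundary L :=
  sum_filter_add_sum_filter_not ..

namespace IsMinNearJoin

variable [Finite V]

/-- Pushing two edges at `t` off `t`, along a path `F` between their other ends. As `J` is smallest,
`F` cannot shrink `J`, so it does not enlarge `L` away from `t`. -/
lemma exists_exchange (hJ : H.IsMinNearJoin U J t) (hc : H.IsBicoloring c)
    (hL : H.boundary L = U + point p) (hcard : 1 < #{e ∈ L | H.Inc t e}) :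
    ∃ K, H.boundary K = H.boundary L ∧ #{e ∈ K | ¬H.Inc t e} ≤ #{e ∈ L | ¬H.Inc t e} ∧
      #{e ∈ K | H.Inc t e} < #{e ∈ L | H.Inc t e} := by
  classical
  set D := {e ∈ L | H.Inc t e}
  set N := {e ∈ L | ¬H.Inc t e}
  have hDN : H.boundary D + H.boundary N = H.boundary L :=
    boundary_filter_add_boundary_filter_not ..
  have hDinc {f} (hf : f ∈ D) : H.Inc t f := (mem_filter.1 hf).2
  have hNinc : ∀ f ∈ symmDiff N J, ¬H.Inc t f := fun f hf =>
    (mem_symmDiff.1 hf).elim (fun h => (mem_filter.1 h.1).2) fun h => hJ.not_inc h.1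
  obtain ⟨e, he, e', he', hne, hreach⟩ := exists_ne_reachable_other (p := p) hNinc
    (fun f hf => ⟨hDinc hf, fun h => hc.other_ne (hDinc hf) (by rw [h])⟩)
    (by rw [boundary_symmDiff, hJ.boundary_eq]
        linear_combination hDN + hL + ZModModule.add_self U) hcard
  obtain ⟨F, hFNJ, hF⟩ := exists_boundary_eq_point_add_point hreach
  have hFinc {f} (hf : f ∈ F) : ¬H.Inc t f := hNinc f (hFNJ hf)
  have hJF : #J ≤ #(symmDiff J F) :=
    hJ.card_le_card_symmDiff hc (hDinc he) (hDinc he') (fun f hf => hFinc hf) hF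
  have hNF : ∀ f ∈ symmDiff N F, ¬H.Inc t f := fun f hf =>
    (mem_symmDiff.1 hf).elim (fun h => (mem_filter.1 h.1).2) fun h => hFinc h.1
  have hDD : ∀ f ∈ (D.erase e).erase e', H.Inc t f := fun f hf =>
    hDinc (mem_of_mem_erase (mem_of_mem_erase hf))
  have hdisj : Disjoint (symmDiff N F) ((D.erase e).erase e') :=
    disjoint_left.2 fun f hf hf' => hNF f hf (hDD f hf')
  refine ⟨symmDiff N F ∪ (D.erase e).erase e', ?_, ?_, ?_⟩
  · rw [boundary_union hdisj, boundary_symmDiff, hF,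
      boundary_erase (mem_erase.2 ⟨hne.symm, he'⟩), boundary_erase he,
      (hDinc he).point_add_point, (hDinc he').point_add_point]
    linear_combination hDN + ZModModule.add_self (point t) +
      ZModModule.add_self (point (H.other t e)) + ZModModule.add_self (point (H.other t e'))
  · rw [filter_union, filter_true_of_mem hNF,
      filter_false_of_mem fun f hf => not_not.2 (hDD f hf), union_empty]
    have := card_symmDiff_add_card_symmDiff hFNJ
    omega
  · rw [filter_union, filter_false_of_mem hNF, filter_true_of_mem hDD, empty_union]
    exact card_lt_card ((erase_subset _ _).trans_ssubset (erase_ssubset he))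

lemma exists_card_inc_le_one (hJ : H.IsMinNearJoin U J t) (hc : H.IsBicoloring c)
    (hL : H.boundary L = U + point p) :
    ∃ K, H.boundary K = H.boundary L ∧ #{e ∈ K | ¬H.Inc t e} ≤ #{e ∈ L | ¬H.Inc t e} ∧
      #{e ∈ K | H.Inc t e} ≤ 1 := by
  induction hn : #{e ∈ L | H.Inc t e} using Nat.strong_induction_on generalizing L with
  | _ n ih =>
    subst hn
    by_cases hcard : 1 < #{e ∈ L | H.Inc t e}
    · obtain ⟨K, hKL, hK, hlt⟩ := hJ.exists_exchange hc hL hcard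
      obtain ⟨K', hK'K, hK', hone⟩ := ih _ hlt (hKL.trans hL) rfl
      exact ⟨K', hK'K.trans hKL, hK'.trans hK, hone⟩
    · exact ⟨L, rfl, le_rfl, not_lt.1 hcard⟩

end IsMinNearJoin

lemma IsMinTJoin.exists_card_le_card_not_inc_add_one [Finite V] (hJ : H.IsMinTJoin T J)
    (hc : H.IsBicoloring c) (hne : J.Nonempty) :
    ∃ t, T t = 1 ∧ ∀ L, H.boundary L = T → #J ≤ #{e ∈ L | ¬H.Inc t e} + 1 := by
  classical
  obtain ⟨e, he⟩ := hne
  set p := H.src e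
  have herase : H.boundary (J.erase e) = T + point p + point (H.tgt e) := by
    rw [boundary_erase he, hJ.boundary_eq, add_assoc]
  obtain ⟨J', t, hJ'⟩ := exists_isMinNearJoin herase
  have hlt : #J' < #J := (hJ'.card_le _ _ herase).trans_lt (card_erase_lt_of_mem he)
  have hpt : t ≠ p := by
    intro h
    refine hlt.not_ge (hJ.card_le _ ?_)
    rw [hJ'.boundary_eq, h]
    linear_combination ZModModule.add_self (point p)
  have hTt : T t + 1 = 0 := by
    have := (congrFun hJ'.boundary_eq t).symm.trans
      (boundary_apply_eq_zero fun e he => hJ'.not_inc he)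
    simpa [point, hpt] using this
  refine ⟨t, CharTwo.add_eq_zero.1 hTt, fun L hL => ?_⟩
  obtain ⟨K, hKL, hK, hone⟩ := hJ'.exists_card_inc_le_one (p := p) hc (L := L) <| by
    rw [hL]
    linear_combination -ZModModule.add_self (point p)
  have hJK := hJ.card_le K (hKL.trans hL)
  have hK' := card_filter_add_card_filter_not (s := K) fun e => H.Inc t e
  omega

end Bipartite

section FractionalTJoin

variable {V E : Type*} [DecidableEq V] [Fintype E] (H : Multigraph V E)

/-- The total weight of the edges with exactly one end in `S`. -/
def cutWeight (x : E → ℝ) (S : Finset V) : ℝ := ∑ e ∈ H.cut univ S, x e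

/-- A fractional `T`-join (more precisely, a point of the dominant of the `T`-join polytope):
nonnegative edge weights of which every cut separating an odd part of `T` carries at least `1`. -/
structure IsFractionalTJoin (T : V → ZMod 2) (y : E → ℝ) : Prop where
  nonneg : ∀ e, 0 ≤ y e
  one_le_cutWeight : ∀ S : Finset V, ∑ v ∈ S, T v = 1 → 1 ≤ H.cutWeight y S

variable {H}

lemma IsFractionalTJoin.one_le_sum_inc {T : V → ZMod 2} {y : E → ℝ} {t : V}
    (hy : H.IsFractionalTJoin T y) (ht : T t = 1) :
    1 ≤ ∑ e with H.Inc t e, y e := by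
  refine (hy.one_le_cutWeight {t} (by rw [sum_singleton, ht])).trans
    (sum_le_sum_of_subset_of_nonneg (fun e he => ?_) fun e _ _ => hy.nonneg e)
  simp only [mem_cut, mem_univ, true_and, mem_singleton] at he
  rw [mem_filter_univ, Inc]
  tauto

lemma cutWeight_sdiff_add_cutWeight_sdiff_le {x : E → ℝ} (hx : ∀ e, 0 ≤ x e) (R S : Finset V) :
    H.cutWeight x (R \ S) + H.cutWeight x (S \ R) ≤ H.cutWeight x R + H.cutWeight x S := by
  simp only [cutWeight, cut, sum_filter, ← sum_add_distrib]
  refine sum_le_sum fun e _ => ?_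
  have := hx e
  simp only [mem_sdiff]
  by_cases H.src e ∈ R <;> by_cases H.src e ∈ S <;>
    by_cases H.tgt e ∈ R <;> by_cases H.tgt e ∈ S <;> simp [*]

lemma cutWeight_union {x : E → ℝ} {P Q : Finset V} (hPQ : Disjoint P Q)
    (hcut : Disjoint (H.cut univ P) (H.cut univ Q)) :
    H.cutWeight x (P ∪ Q) = H.cutWeight x P + H.cutWeight x Q := by
  classical
  rw [cutWeight, cutWeight, cutWeight, ← sum_union hcut]
  congr 1
  ext e
  rw [Finset.disjoint_left] at hPQ hcut
  have := @hcut e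
  have hsrc := @hPQ (H.src e)
  have htgt := @hPQ (H.tgt e)
  simp only [mem_cut, mem_univ, true_and, mem_union] at *
  tauto

end FractionalTJoin

section Contraction

variable {V E : Type*} [DecidableEq V]

/-- The image of a `0`-chain under a map of vertices. -/
def push [Fintype V] (f : V → V) : (V → ZMod 2) →+ (V → ZMod 2) where
  toFun T w := ∑ v with f v = w, T v
  map_zero' := by
    ext
    simp
  map_add' T U := by
    ext
    simp [sum_add_distrib]

lemma push_apply [Fintype V] (f : V → V) (T : V → ZMod 2) (w : V) :
    push f T w = ∑ v with f v = w, T v := rfl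

lemma push_point [Fintype V] (f : V → V) (v : V) : push f (point v) = point (f v) := by
  ext w
  rw [push_apply, sum_point]
  simp only [mem_filter_univ, point, Pi.single_apply, eq_comm]

lemma sum_push [Fintype V] (f : V → V) (T : V → ZMod 2) (S : Finset V) :
    ∑ w ∈ S, push f T w = ∑ v with f v ∈ S, T v :=
  sum_fiberwise_eq_sum_filter ..

variable (H : Multigraph V E)

open Classical in
/-- The vertex map sending the neighbours of `t` to `t`. -/
noncomputable def collapse (t x : V) : V := if ∃ e, H.Inc t e ∧ H.other t e = x then t else x

/-- The multigraph obtained by contracting the star of `t` to the vertex `t`. The former neighbours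
of `t` are kept as isolated vertices. -/
noncomputable def contractStar (t : V) : Multigraph V {e // ¬H.Inc t e} where
  src e := H.collapse t (H.src e)
  tgt e := H.collapse t (H.tgt e)

variable {H} {t : V}

lemma collapse_self : H.collapse t t = t := ite_self _

lemma Inc.collapse_other {e : E} (h : H.Inc t e) : H.collapse t (H.other t e) = t :=
  if_pos ⟨e, h, rfl⟩

lemma Inc.collapse_src_tgt {e : E} (h : H.Inc t e) :
    H.collapse t (H.src e) = t ∧ H.collapse t (H.tgt e) = t := by
  rcases h.src_tgt_eq with ⟨h₁, h₂⟩ | ⟨h₁, h₂⟩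
  · rw [h₁, h₂]
    exact ⟨collapse_self, h.collapse_other⟩
  · rw [h₁, h₂]
    exact ⟨h.collapse_other, collapse_self⟩

lemma IsBicoloring.contractStar {c : V → Bool} (hc : H.IsBicoloring c) (t : V) :
    (H.contractStar t).IsBicoloring (Function.update c t !c t) := by
  have hcollapse {x : V} (hx : x ≠ t) : Function.update c t (!c t) (H.collapse t x) = c x := by
    unfold collapse
    split_ifs with h
    · obtain ⟨e, he, rfl⟩ := h
      rw [Function.update_self, Bool.not_eq]
      exact (hc.other_ne he).symm
    · rw [Function.update_of_ne hx]
  rintro ⟨e, he⟩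
  obtain ⟨hsrc, htgt⟩ := not_or.1 he
  simpa only [Multigraph.contractStar, hcollapse hsrc, hcollapse htgt] using hc e

variable [Fintype V] {T : V → ZMod 2}

lemma boundary_contractStar (K : Finset {e // ¬H.Inc t e}) :
    (H.contractStar t).boundary K =
      push (H.collapse t) (H.boundary (K.map (Function.Embedding.subtype _))) := by
  simp only [boundary, sum_map, map_sum, map_add, push_point]
  rfl

lemma push_collapse_boundary_star {D : Finset E} (hD : ∀ e ∈ D, H.Inc t e) :
    push (H.collapse t) (H.boundary D) = 0 := by
  rw [boundary, map_sum]
  refine sum_eq_zero fun e he => ?_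
  rw [map_add, push_point, push_point, (hD e he).collapse_src_tgt.1, (hD e he).collapse_src_tgt.2,
    ZModModule.add_self]

lemma boundary_contractStar_subtype (J : Finset E) :
    (H.contractStar t).boundary (J.subtype (¬H.Inc t ·)) =
      push (H.collapse t) (H.boundary J) := by
  rw [boundary_contractStar, subtype_map, ← boundary_filter_add_boundary_filter_not J (H.Inc t),
    map_add, push_collapse_boundary_star fun e he => (mem_filter.1 he).2, zero_add]

lemma eq_zero_of_push_collapse_eq_zero {x : V} (hT : push (H.collapse t) T = 0) (hxt : x ≠ t)
    (hx : ∀ e, H.Inc t e → H.other t e ≠ x) : T x = 0 := by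
  have hfibre : ({v | H.collapse t v = x} : Finset V) = {x} := by
    ext v
    rw [mem_filter_univ, mem_singleton]
    unfold collapse
    split_ifs with h
    · obtain ⟨e, he, rfl⟩ := h
      exact ⟨fun h => absurd h.symm hxt, fun h => absurd h (hx e he)⟩
    · rfl
  have := congrFun hT x
  rwa [push_apply, hfibre, sum_singleton] at this

/-- A join of the contraction lifts to `H` using edges at `t` only. -/
lemma exists_boundary_eq_of_contractStar [Finite E] {K : Finset {e // ¬H.Inc t e}}
    (hsum : ∑ v, T v = 0) (hK : (H.contractStar t).boundary K = push (H.collapse t) T) :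
    ∃ L, H.boundary L = T ∧ #{e ∈ L | ¬H.Inc t e} ≤ #K := by
  classical
  cases nonempty_fintype E
  set K' := K.map (Function.Embedding.subtype _)
  have hpush : push (H.collapse t) (H.boundary K' + T) = 0 := by
    rw [map_add, ← boundary_contractStar, hK, ZModModule.add_self]
  obtain ⟨D, hD, hDT⟩ := exists_boundary_eq (M := ({e | H.Inc t e} : Finset E)) (t := t)
      (T := H.boundary K' + T) (by simp only [Pi.add_apply, sum_add_distrib, sum_univ_boundary,
        hsum, add_zero]) <| by
    intro x hx
    by_cases hxt : x = t
    · rw [hxt]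
    have : ∃ e, H.Inc t e ∧ H.other t e = x := by
      by_contra! h
      exact hx (eq_zero_of_push_collapse_eq_zero hpush hxt h)
    obtain ⟨e, he, rfl⟩ := this
    exact (he.reachable_other (by simpa using he)).symm
  refine ⟨symmDiff K' D, ?_, ?_⟩
  · rw [boundary_symmDiff, hDT]
    linear_combination ZModModule.add_self (H.boundary K')
  · rw [← card_map (Function.Embedding.subtype _)]
    refine card_le_card fun e he => ?_
    obtain ⟨h, hinc⟩ := mem_filter.1 he
    exact (mem_symmDiff.1 h).elim And.left fun h => absurd ((mem_filter_univ _).1 (hD h.1)) hinc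

namespace IsFractionalTJoin

variable [Fintype E] {y : E → ℝ}

lemma contractStar (hy : H.IsFractionalTJoin T y) (t : V) :
    (H.contractStar t).IsFractionalTJoin (push (H.collapse t) T) (fun e => y e) where
  nonneg e := hy.nonneg e
  one_le_cutWeight S hS := by
    rw [sum_push] at hS
    refine (hy.one_le_cutWeight _ hS).trans_eq ?_
    have hcut : H.cut univ {v | H.collapse t v ∈ S} =
        ((H.contractStar t).cut univ S).map (Function.Embedding.subtype _) := by
      ext e
      simp only [mem_cut, mem_map, mem_univ, true_and, mem_filter_univ,
        Function.Embedding.subtype_apply, Subtype.exists, exists_and_right, exists_eq_right]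
      refine ⟨fun h => ⟨fun he => h ?_, h⟩, fun ⟨_, h⟩ => h⟩
      rw [he.collapse_src_tgt.1, he.collapse_src_tgt.2]
    rw [cutWeight, cutWeight, hcut, sum_map]
    rfl

end IsFractionalTJoin

end Contraction

section EdmondsJohnson

/-- The fractional form of Seymour's theorem on bipartite graphs, by Sebő's induction: contracting
the star of a suitable vertex of `T` lowers the left side by at most `1` and the right side by at
least `1`. -/
theorem IsMinTJoin.card_le_sum {V E : Type*} [DecidableEq V] [Finite V] [Fintype E]
    {H : Multigraph V E} {c : V → Bool} {T : V → ZMod 2} {J : Finset E} {y : E → ℝ}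
    (hJ : H.IsMinTJoin T J) (hc : H.IsBicoloring c) (hy : H.IsFractionalTJoin T y) :
    (#J : ℝ) ≤ ∑ e, y e := by
  induction hn : Fintype.card E using Nat.strong_induction_on generalizing E c T with
  | _ n ih =>
    subst hn
    cases nonempty_fintype V
    obtain rfl | hne := J.eq_empty_or_nonempty
    · simpa using sum_nonneg fun e _ => hy.nonneg e
    obtain ⟨t, ht, hlift⟩ := hJ.exists_card_le_card_not_inc_add_one hc hne
    obtain ⟨e, he⟩ : ∃ e, H.Inc t e := by
      by_contra! h
      have := boundary_apply_eq_zero (J := J) (fun e _ => h e)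
      rw [hJ.boundary_eq, ht] at this
      exact one_ne_zero this
    obtain ⟨K, hK⟩ := exists_isMinTJoin (boundary_contractStar_subtype (H := H) (t := t) J)
    have hKy := ih _ (Fintype.card_subtype_lt (not_not.2 he)) hK (hc.contractStar t)
      (hJ.boundary_eq ▸ hy.contractStar t) rfl
    obtain ⟨L, hL, hLK⟩ := exists_boundary_eq_of_contractStar (sum_univ_boundary J) hK.boundary_eq
    have hJK : (#J : ℝ) ≤ #K + 1 := by
      have := hlift L (hL.trans hJ.boundary_eq)
      exact_mod_cast this.trans (by omega)
    calc (#J : ℝ) ≤ #K + 1 := hJK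
      _ ≤ ∑ e : {e // ¬H.Inc t e}, y e + ∑ e with H.Inc t e, y e :=
        add_le_add hKy (hy.one_le_sum_inc ht)
      _ = ∑ e, y e := by
        rw [← sum_filter_not_add_sum_filter univ (H.Inc t),
          ← sum_subtype_eq_sum_filter (p := fun e => ¬H.Inc t e), subtype_univ]

variable {V E : Type*} (H : Multigraph V E)

/-- The subdivision of every edge `e` by the new vertex `Sum.inr e`; the two halves of `e` are
`(e, true)` and `(e, false)`. It turns any multigraph into a bipartite one. -/
def subdivide : Multigraph (V ⊕ E) (E × Bool) where
  src p := .inl (if p.2 then H.src p.1 else H.tgt p.1)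
  tgt p := .inr p.1

variable {H}

lemma isBicoloring_subdivide : H.subdivide.IsBicoloring Sum.isLeft :=
  fun _ => Bool.true_eq_false.mp

variable [DecidableEq V] {T : V → ZMod 2}

lemma boundary_subdivide_inr [DecidableEq E] (K : Finset (E × Bool)) (e : E) :
    H.subdivide.boundary K (.inr e) =
      (if (e, true) ∈ K then 1 else 0) + if (e, false) ∈ K then 1 else 0 := by
  have hends : ∀ p, (point (H.subdivide.src p) + point (H.subdivide.tgt p)) (.inr e) =
      ((if p = (e, true) then 1 else 0) + if p = (e, false) then 1 else 0 : ZMod 2) := by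
    rintro ⟨f, i⟩
    cases i <;> simp [subdivide, point, Pi.single_apply, eq_comm (a := e) (b := f)]
  rw [boundary, Finset.sum_apply, sum_congr rfl fun p _ => hends p, sum_add_distrib, sum_ite_eq',
    sum_ite_eq']

lemma boundary_subdivide_product_univ [DecidableEq E] (J : Finset E) :
    H.subdivide.boundary (J ×ˢ univ) = Sum.elim (H.boundary J) 0 := by
  ext (v | e)
  · rw [boundary, sum_product]
    simp [boundary, subdivide, point, Pi.single_apply]
  · simp [boundary_subdivide_inr, CharTwo.add_self_eq_zero]

lemma exists_eq_product_univ [DecidableEq E] {K : Finset (E × Bool)}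
    (hK : H.subdivide.boundary K = Sum.elim T 0) : ∃ J, K = J ×ˢ univ := by
  refine ⟨K.image Prod.fst, ?_⟩
  have hiff (e : E) : (e, true) ∈ K ↔ (e, false) ∈ K := by
    have := congrFun hK (.inr e)
    rw [boundary_subdivide_inr] at this
    by_cases h₁ : (e, true) ∈ K <;> by_cases h₂ : (e, false) ∈ K <;> simp_all
  ext ⟨e, i⟩
  cases i <;> simp [hiff]

lemma IsFractionalTJoin.subdivide [DecidableEq E] [Fintype E] {y : E → ℝ}
    (hy : H.IsFractionalTJoin T y) :
    H.subdivide.IsFractionalTJoin (Sum.elim T 0) (fun p => y p.1) where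
  nonneg p := hy.nonneg p.1
  one_le_cutWeight S hS := by
    have hT : ∑ v ∈ S.toLeft, T v = 1 := by
      rw [← hS, ← toLeft_disjSum_toRight (u := S), sum_disjSum]
      simp
    refine (hy.one_le_cutWeight _ hT).trans ?_
    simp only [cutWeight, cut, sum_filter, Fintype.sum_prod_type, Fintype.sum_bool]
    refine sum_le_sum fun e _ => ?_
    have := hy.nonneg e
    by_cases h₁ : Sum.inl (H.src e) ∈ S <;> by_cases h₂ : Sum.inl (H.tgt e) ∈ S <;>
      by_cases h₃ : Sum.inr e ∈ S <;> simp [Multigraph.subdivide, h₁, h₂, h₃, this]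

/-- The theorem of Edmonds and Johnson: in the subdivision, both sides double. -/
theorem IsFractionalTJoin.exists_boundary_eq_card_le [Finite V] [Fintype E] {J : Finset E}
    {y : E → ℝ} (hy : H.IsFractionalTJoin T y) (hJ : H.boundary J = T) :
    ∃ J, H.boundary J = T ∧ (#J : ℝ) ≤ ∑ e, y e := by
  classical
  obtain ⟨K, hK⟩ := exists_isMinTJoin (boundary_subdivide_product_univ (H := H) J)
  obtain ⟨L, rfl⟩ := exists_eq_product_univ hK.boundary_eq
  refine ⟨L, ?_, ?_⟩
  · have := hK.boundary_eq
    rw [boundary_subdivide_product_univ, hJ] at this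
    exact (Sum.elim_eq_iff.1 this).1
  · have := hK.card_le_sum isBicoloring_subdivide (hJ ▸ hy.subdivide)
    simp only [card_product, card_univ, Fintype.card_bool, Nat.cast_mul, Nat.cast_ofNat,
      Fintype.sum_prod_type, Fintype.sum_bool, sum_add_distrib] at this
    linarith

end EdmondsJohnson

section Euler

variable {V E : Type*} {H : Multigraph V E} {M : Finset E} {s t : V}

/-- Some walk of `G` from `s` to `t`, no longer than `M`, visits the component of `s` in `M`. -/
def IsTraversable (H : Multigraph V E) (G : SimpleGraph V) (M : Finset E) (s t : V) : Prop :=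
  ∃ w : G.Walk s t, w.length ≤ #M ∧ ∀ v, (H.graph M).Reachable s v → v ∈ w.support

lemma IsTraversable.nil {G : SimpleGraph V} (hM : ∀ e ∈ M, ¬H.Inc s e) :
    H.IsTraversable G M s s := by
  classical
  refine ⟨.nil, Nat.zero_le _, fun v hv => ?_⟩
  have := (mem_iff_mem_of_reachable (cut_singleton_eq_empty hM) hv).1 (mem_singleton_self s)
  exact List.mem_singleton.2 (mem_singleton.1 this)

variable [DecidableEq V]

lemma boundary_filter_src_mem {A : Finset V} (hA : H.cut M A = ∅) (v : V) :
    H.boundary {e ∈ M | H.src e ∈ A} v = if v ∈ A then H.boundary M v else 0 := by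
  have hclosed := cut_eq_empty_iff.1 hA
  have hsplit := congrFun (boundary_filter_add_boundary_filter_not (H := H) M (H.src · ∈ A)) v
  split_ifs with hv
  · rw [← hsplit, Pi.add_apply, boundary_apply_eq_zero (J := {e ∈ M | H.src e ∉ A}), add_zero]
    rintro e he (rfl | rfl)
    all_goals grind
  · refine boundary_apply_eq_zero ?_
    rintro e he (rfl | rfl)
    all_goals grind

lemma boundary_filter_src_mem_eq_zero {A : Finset V} (hA : H.cut M A = ∅)
    (hM : H.boundary M = point s + point t) (hs : s ∉ A) :
    H.boundary {e ∈ M | H.src e ∈ A} = 0 := by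
  have ht : t ∉ A := by
    intro ht
    have := sum_boundary_eq_zero hA
    simp [hM, sum_add_distrib, sum_point, hs, ht] at this
  ext v
  rw [boundary_filter_src_mem hA, hM]
  refine ite_eq_right_iff.2 fun hv => ?_
  simp [point, ne_of_mem_of_not_mem hv hs, ne_of_mem_of_not_mem hv ht]

lemma reachable_filter_src_mem {A : Finset V} (hA : H.cut M A = ∅) {x y : V} (hx : x ∈ A)
    (hxy : (H.graph M).Reachable x y) : (H.graph {e ∈ M | H.src e ∈ A}).Reachable x y := by
  refine (reachable_induction (P := fun v => v ∈ A ∧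
    (H.graph {e ∈ M | H.src e ∈ A}).Reachable x v) hxy ⟨hx, .refl _⟩ ?_).2
  rintro e he v hv ⟨hvA, hxv⟩
  have hends : H.src e ∈ A ∧ H.other v e ∈ A := by
    have := cut_eq_empty_iff.1 hA e he
    rcases hv.src_tgt_eq with ⟨h₁, h₂⟩ | ⟨h₁, h₂⟩ <;> simp_all
  exact ⟨hends.2, hxv.trans (hv.reachable_other (mem_filter.2 ⟨he, hends.1⟩))⟩

lemma Inc.other_eq_or_eq {e : E} (hs : H.Inc s e) (v : V) :
    H.other v e = s ∨ H.other v e = H.other s e := by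
  simp only [Inc, other] at *
  grind

lemma Inc.reachable_erase [DecidableEq E] {e : E} (hs : H.Inc s e) {v : V}
    (hv : (H.graph M).Reachable s v) :
    (H.graph (M.erase e)).Reachable s v ∨ (H.graph (M.erase e)).Reachable (H.other s e) v := by
  refine reachable_induction (P := fun v => (H.graph (M.erase e)).Reachable s v ∨
    (H.graph (M.erase e)).Reachable (H.other s e) v) hv (.inl (.refl _)) fun f hf w hw hsw => ?_
  by_cases hfe : f = e
  · subst hfe
    rcases hs.other_eq_or_eq w with h | h
    · exact .inl (h ▸ .refl _)
    · exact .inr (h ▸ .refl _)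
  · have hwf := hw.reachable_other (mem_erase.2 ⟨hfe, hf⟩)
    exact hsw.imp (·.trans hwf) (·.trans hwf)

lemma Inc.adj_other {G : SimpleGraph V} {e : E} (hs : H.Inc s e)
    (he : G.Adj (H.src e) (H.tgt e)) : G.Adj s (H.other s e) := by
  rcases hs.src_tgt_eq with ⟨h₁, h₂⟩ | ⟨h₁, h₂⟩
  · rwa [h₁, h₂] at he
  · rw [h₁, h₂] at he
    exact he.symm

namespace IsTraversable

variable [DecidableEq E] {G : SimpleGraph V} {e : E}

lemma cons (hG : G.Adj s (H.other s e)) (he : e ∈ M) (hs : H.Inc s e)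
    (hreach : (H.graph (M.erase e)).Reachable (H.other s e) s)
    (h : H.IsTraversable G (M.erase e) (H.other s e) t) : H.IsTraversable G M s t := by
  obtain ⟨w, hlength, hw⟩ := h
  refine ⟨.cons hG w, ?_, fun v hv => ?_⟩
  · rw [Walk.length_cons, ← card_erase_add_one he]
    omega
  · rw [Walk.support_cons]
    exact List.mem_cons_of_mem _ (hw v ((hs.reachable_erase hv).elim hreach.trans id))

lemma append_cons [Fintype V] (hG : G.Adj s (H.other s e)) (he : e ∈ M) (hs : H.Inc s e)
    {A : Finset V} (hA : H.cut (M.erase e) A = ∅) (hsA : s ∈ A) (hotherA : H.other s e ∉ A)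
    (hs' : H.IsTraversable G {f ∈ M.erase e | H.src f ∈ A} s s)
    (ht' : H.IsTraversable G {f ∈ M.erase e | H.src f ∈ Aᶜ} (H.other s e) t) :
    H.IsTraversable G M s t := by
  obtain ⟨w₁, hlength₁, hw₁⟩ := hs'
  obtain ⟨w₂, hlength₂, hw₂⟩ := ht'
  refine ⟨w₁.append (.cons hG w₂), ?_, fun v hv => ?_⟩
  · have := card_filter_add_card_filter_not (s := M.erase e) (H.src · ∈ A)
    simp only [mem_compl] at hlength₂
    rw [Walk.length_append, Walk.length_cons, ← card_erase_add_one he]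
    omega
  · rw [Walk.mem_support_append_iff, Walk.support_cons]
    rcases hs.reachable_erase hv with h | h
    · exact .inl (hw₁ v (reachable_filter_src_mem hA hsA h))
    · exact .inr (List.mem_cons_of_mem _ (hw₂ v
        (reachable_filter_src_mem ((cut_compl A).trans hA) (mem_compl.2 hotherA) h)))

end IsTraversable

/-- Euler's theorem, by Fleury's algorithm: leave `s` along an edge `e`, but if `e` is a bridge,
first tour what remains on the side of `s`. -/
theorem isTraversable_of_boundary_eq [Finite V] {G : SimpleGraph V}
    (hG : ∀ e ∈ M, G.Adj (H.src e) (H.tgt e)) (hM : H.boundary M = point s + point t) :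
    H.IsTraversable G M s t := by
  classical
  cases nonempty_fintype V
  induction hn : #M using Nat.strong_induction_on generalizing M s t with
  | _ n ih =>
    subst hn
    by_cases hinc : ∃ e ∈ M, H.Inc s e
    · obtain ⟨e, he, hs⟩ := hinc
      have hse := hs.adj_other (hG e he)
      have hcard := card_erase_lt_of_mem he
      have hG' : ∀ f ∈ M.erase e, G.Adj (H.src f) (H.tgt f) := fun f hf =>
        hG f (mem_of_mem_erase hf)
      have hM' : H.boundary (M.erase e) = point (H.other s e) + point t := by
        rw [boundary_erase he, hM, hs.point_add_point]
        linear_combination ZModModule.add_self (point s)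
      by_cases hreach : (H.graph (M.erase e)).Reachable (H.other s e) s
      · exact .cons hse he hs hreach (ih _ hcard hG' hM' rfl)
      set A := H.component (M.erase e) s
      have hA : H.cut (M.erase e) A = ∅ := cut_component s
      have huA : H.other s e ∉ A := fun h => hreach (mem_component.1 h).symm
      have hMA := boundary_filter_src_mem_eq_zero hA hM' huA
      have hMAc := boundary_filter_add_boundary_filter_not (H := H) (M.erase e) (H.src · ∈ A)
      rw [hMA, zero_add, hM'] at hMAc
      refine .append_cons hse he hs hA (mem_component.2 (.refl _)) huA
        (ih _ ((card_filter_le _ _).trans_lt hcard) (fun f hf => hG' f (mem_filter.1 hf).1) ?_ rfl)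
        (ih _ ((card_filter_le _ _).trans_lt hcard) (fun f hf => hG' f (mem_filter.1 hf).1) ?_ rfl)
      · rw [hMA, ZModModule.add_self]
      · simpa only [mem_compl] using hMAc
    · push Not at hinc
      have hst : t = s := by
        have := boundary_apply_eq_zero hinc
        rw [hM] at this
        by_contra hst
        simp [point, hst] at this
      rw [hst]
      exact .nil hinc

end Euler

section Double

variable {V E : Type*} (H : Multigraph V E)

/-- The multigraph in which every edge of `H` is doubled. -/
def double : Multigraph V (E ⊕ E) where
  src := Sum.elim H.src H.src
  tgt := Sum.elim H.tgt H.tgt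

variable {H}

lemma boundary_double [DecidableEq V] (F J : Finset E) :
    H.double.boundary (F.disjSum J) = H.boundary F + H.boundary J := by
  simp only [boundary, double, sum_disjSum, Sum.elim_inl, Sum.elim_inr]

lemma graph_le_graph_double (F J : Finset E) : H.graph F ≤ H.double.graph (F.disjSum J) := by
  intro x y hxy
  obtain ⟨hne, h⟩ := (fromRel_adj ..).1 hxy
  refine (fromRel_adj ..).2 ⟨hne, h.imp ?_ ?_⟩ <;>
    exact fun ⟨e, he, h⟩ => ⟨.inl e, inl_mem_disjSum.2 he, h⟩

end Double

section HeldKarp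

variable {V E : Type*} [Fintype V] [DecidableEq V] [Fintype E] (H : Multigraph V E) (s t : V)
  (x : E → ℝ)

/-- The constraints of the Held-Karp path relaxation on `(H, s, t)`. -/
structure IsHeldKarpFeasible : Prop where
  nonneg : ∀ e, 0 ≤ x e
  two_le_cutWeight : ∀ S : Finset V, S.Nonempty → S ≠ univ → (s ∈ S ↔ t ∈ S) →
    2 ≤ H.cutWeight x S
  one_le_cutWeight : ∀ S : Finset V, S.Nonempty → S ≠ univ → ¬(s ∈ S ↔ t ∈ S) →
    1 ≤ H.cutWeight x S

/-- Narrow cuts, of weight less than `2`, represented by their side containing `s`. -/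
structure IsNarrow (R : Finset V) : Prop where
  mem : s ∈ R
  ne_univ : R ≠ univ
  cutWeight_lt : H.cutWeight x R < 2

variable {H s t x}

namespace IsHeldKarpFeasible

variable (hx : H.IsHeldKarpFeasible s t x)
include hx

lemma le_cutWeight {S : Finset V} (hS : S.Nonempty) (hS' : S ≠ univ) :
    2 - (if s ∈ S then 1 else 0) - (if t ∈ S then 1 else 0) ≤ H.cutWeight x S := by
  have htwo := hx.two_le_cutWeight S hS hS'
  have hone := hx.one_le_cutWeight S hS hS'
  by_cases hs : s ∈ S <;> by_cases ht : t ∈ S <;> simp [hs, ht] at htwo hone ⊢ <;> linarith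

lemma notMem_of_isNarrow {R : Finset V} (hR : H.IsNarrow s x R) : t ∉ R := fun ht =>
  hR.cutWeight_lt.not_ge
    (hx.two_le_cutWeight R ⟨s, hR.mem⟩ hR.ne_univ (iff_of_true hR.mem ht))

/-- Otherwise the cuts of `R \ S` and `S \ R`, not separating `s` from `t`, weigh at least `2`. -/
lemma subset_or_subset {R S : Finset V} (hR : H.IsNarrow s x R) (hS : H.IsNarrow s x S) :
    R ⊆ S ∨ S ⊆ R := by
  have hsdiff {R S : Finset V} (hR : H.IsNarrow s x R) (hS : H.IsNarrow s x S) (hRS : ¬R ⊆ S) :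
      2 ≤ H.cutWeight x (R \ S) := by
    have hs : s ∉ R \ S := fun h => (mem_sdiff.1 h).2 hS.mem
    have ht : t ∉ R \ S := fun h => hx.notMem_of_isNarrow hR (mem_sdiff.1 h).1
    exact hx.two_le_cutWeight _ (sdiff_nonempty.2 hRS) (fun h => hs (h ▸ mem_univ s))
      (iff_of_false hs ht)
  by_contra! hcon
  have := cutWeight_sdiff_add_cutWeight_sdiff_le (H := H) hx.nonneg R S
  linarith [hsdiff hR hS hcon.1, hsdiff hS hR hcon.2, hR.cutWeight_lt, hS.cutWeight_lt]

lemma exists_largest_isNarrow_ssubset {U : Finset V} (hU : U.Nonempty) :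
    ∃ R ⊂ U, (R = ∅ ∨ H.IsNarrow s x R) ∧ ∀ Q, H.IsNarrow s x Q → Q ⊂ U → Q ⊆ R := by
  classical
  let P R := R ⊂ U ∧ (R = ∅ ∨ H.IsNarrow s x R)
  have hP : P (({Q | P Q} : Finset (Finset V)).sup id) := by
    refine sup_induction ⟨empty_ssubset.2 hU, .inl rfl⟩ ?_ fun Q hQ => (mem_filter_univ Q).1 hQ
    rintro A ⟨hAU, hA⟩ B ⟨hBU, hB⟩
    rcases hA with rfl | hA
    · simpa using ⟨hBU, hB⟩
    rcases hB with rfl | hB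
    · simpa using ⟨hAU, .inr hA⟩
    rcases hx.subset_or_subset hA hB with h | h
    · simpa [P, sup_of_le_right h] using ⟨hBU, .inr hB⟩
    · simpa [P, sup_of_le_left h] using ⟨hAU, .inr hA⟩
  exact ⟨_, hP.1, hP.2, fun Q hQ hQU => le_sup (f := id) ((mem_filter_univ Q).2 ⟨hQU, .inr hQ⟩)⟩

lemma exists_smallest_isNarrow_ssuperset {U : Finset V} (hU : U ≠ univ) :
    ∃ S, U ⊂ S ∧ (S = univ ∨ H.IsNarrow s x S) ∧ ∀ Q, H.IsNarrow s x Q → U ⊂ Q → S ⊆ Q := by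
  classical
  let P S := U ⊂ S ∧ (S = univ ∨ H.IsNarrow s x S)
  have hP : P (({Q | P Q} : Finset (Finset V)).inf id) := by
    refine inf_induction ⟨ssubset_univ_iff.2 hU, .inl rfl⟩ ?_ fun Q hQ => (mem_filter_univ Q).1 hQ
    rintro A ⟨hAU, hA⟩ B ⟨hBU, hB⟩
    rcases hA with rfl | hA
    · simpa using ⟨hBU, hB⟩
    rcases hB with rfl | hB
    · simpa using ⟨hAU, .inr hA⟩
    rcases hx.subset_or_subset hA hB with h | h
    · simpa [P, inf_of_le_left h] using ⟨hAU, .inr hA⟩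
    · simpa [P, inf_of_le_right h] using ⟨hBU, .inr hB⟩
  exact ⟨_, hP.1, hP.2, fun Q hQ hQU => inf_le (f := id) ((mem_filter_univ Q).2 ⟨hQU, .inr hQ⟩)⟩

lemma le_cutWeight_add_cutWeight {P Q : Finset V} (hP : P.Nonempty) (hQ : Q.Nonempty)
    (hPQ : Disjoint P Q) :
    4 - (if s ∈ P ∪ Q then 1 else 0) - (if t ∈ P ∪ Q then 1 else 0) ≤
      H.cutWeight x P + H.cutWeight x Q := by
  have hle {P Q : Finset V} (hP : P.Nonempty) (hQ : Q.Nonempty) (hPQ : Disjoint P Q) :=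
    hx.le_cutWeight hP (by rintro rfl; exact hQ.ne_empty (top_disjoint.1 hPQ))
  have hunion (p : V) : (if p ∈ P ∪ Q then 1 else 0 : ℝ) =
      (if p ∈ P then 1 else 0) + if p ∈ Q then 1 else 0 := by
    rw [Finset.disjoint_left] at hPQ
    have := @hPQ p
    by_cases h₁ : p ∈ P <;> by_cases h₂ : p ∈ Q <;> simp_all
  linarith [hle hP hQ hPQ, hle hQ hP hPQ.symm, hunion s, hunion t]

/-- If no edge joined `U \ R` to `S \ U`, their cuts would weigh together at most as much as those
of `R` and `S`. -/
lemma not_disjoint_cut {R U S : Finset V} (hRU : R ⊂ U) (hUS : U ⊂ S)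
    (hR : R = ∅ ∨ H.IsNarrow s x R) (hS : S = univ ∨ H.IsNarrow s x S) :
    ¬Disjoint (H.cut univ (U \ R)) (H.cut univ (S \ U)) := by
  intro hcut
  have hRS : R ⊆ S := hRU.1.trans hUS.1
  have hunion : U \ R ∪ S \ U = S \ R := by grind
  have hdisj : Disjoint (U \ R) (S \ U) := disjoint_sdiff.mono_left sdiff_subset
  have hlower := hx.le_cutWeight_add_cutWeight (sdiff_nonempty.2 hRU.2) (sdiff_nonempty.2 hUS.2)
    hdisj
  have hupper := cutWeight_sdiff_add_cutWeight_sdiff_le (H := H) hx.nonneg R S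
  have hempty : H.cutWeight x ∅ = 0 := by simp [cutWeight, cut]
  have huniv : H.cutWeight x univ = 0 := by simp [cutWeight, cut]
  rw [← cutWeight_union hdisj hcut, hunion] at hlower
  rw [sdiff_eq_empty_iff_subset.2 hRS, hempty] at hupper
  have hRs : H.cutWeight x R + (if s ∈ S \ R then 1 else 0) < 2 := by
    rcases hR with rfl | hR
    · split_ifs <;> linarith
    · simpa [hR.mem] using hR.cutWeight_lt
  have hSt : H.cutWeight x S + (if t ∈ S \ R then 1 else 0) < 2 := by
    rcases hS with rfl | hS
    · split_ifs <;> linarith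
    · simpa [hx.notMem_of_isNarrow hS] using hS.cutWeight_lt
  linarith

lemma exists_mem_cut_forall_notMem_cut {U : Finset V} (hU : U.Nonempty) (hU' : U ≠ univ) :
    ∃ e ∈ H.cut univ U, ∀ Q, H.IsNarrow s x Q → Q ⊂ U ∨ U ⊂ Q → e ∉ H.cut univ Q := by
  obtain ⟨R, hRU, hR, hRmax⟩ := hx.exists_largest_isNarrow_ssubset hU
  obtain ⟨S, hUS, hS, hSmin⟩ := hx.exists_smallest_isNarrow_ssuperset hU'
  obtain ⟨e, heP, heQ⟩ := Finset.not_disjoint_iff.1 (hx.not_disjoint_cut hRU hUS hR hS)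
  have hends : H.src e ∈ U \ R ∧ H.tgt e ∈ S \ U ∨ H.src e ∈ S \ U ∧ H.tgt e ∈ U \ R := by
    simp only [mem_cut] at heP heQ
    grind
  have hmem (Q : Finset V) : e ∈ H.cut univ Q ↔ ¬(H.src e ∈ Q ↔ H.tgt e ∈ Q) := by
    simp only [mem_cut, mem_univ, true_and]
  refine ⟨e, (hmem U).2 (by grind), fun Q hQ hQU => ?_⟩
  rw [hmem, not_not]
  rcases hQU with h | h
  · have := hRmax Q hQ h
    grind
  · have := hSmin Q hQ h
    have := hUS.1
    grind

end IsHeldKarpFeasible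

variable (H s x) in
/-- Gao's tree: a tree `F` on the vertex set `U` rooted at `s` (of which only the number of edges
and the reachability of `U` are recorded), such that every narrow cut either contains exactly one
edge of `F` or has all of `U` on its side. -/
structure IsNarrowTree (U : Finset V) (F : Finset E) : Prop where
  mem : s ∈ U
  card_lt : #F < #U
  reachable : ∀ v ∈ U, (H.graph F).Reachable s v
  narrow : ∀ R, H.IsNarrow s x R → R ⊂ U ∧ #(H.cut F R) = 1 ∨ U ⊆ R ∧ H.cut F R = ∅

lemma isNarrowTree_singleton : H.IsNarrowTree s x {s} ∅ where
  mem := mem_singleton_self s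
  card_lt := by simp
  reachable v hv := by rw [mem_singleton.1 hv]
  narrow R hR := .inr ⟨singleton_subset_iff.2 hR.mem, rfl⟩

lemma IsHeldKarpFeasible.exists_isNarrowTree_insert [DecidableEq E]
    (hx : H.IsHeldKarpFeasible s t x) {U : Finset V} {F : Finset E} (hF : H.IsNarrowTree s x U F)
    (hU : U ≠ univ) : ∃ v ∉ U, ∃ e, H.IsNarrowTree s x (insert v U) (insert e F) := by
  obtain ⟨e, heU, he⟩ := hx.exists_mem_cut_forall_notMem_cut ⟨s, hF.mem⟩ hU
  obtain ⟨w, hw, hwe, hv⟩ := exists_inc_other_notMem heU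
  have hreach {v : V} (hv : v ∈ U) : (H.graph (insert e F)).Reachable s v :=
    (hF.reachable v hv).mono (graph_mono (subset_insert e F))
  refine ⟨H.other w e, hv, e, mem_insert_of_mem hF.mem, ?_, ?_, fun Q hQ => ?_⟩
  · rw [card_insert_of_notMem hv]
    exact (card_insert_le e F).trans_lt (Nat.succ_lt_succ hF.card_lt)
  · rintro v hv
    rcases mem_insert.1 hv with rfl | hv
    · exact (hreach hw).trans (hwe.reachable_other (mem_insert_self e F))
    · exact hreach hv
  · rw [cut_insert]
    rcases hF.narrow Q hQ with ⟨hQU, hcard⟩ | ⟨hUQ, hempty⟩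
    · rw [if_neg (he Q hQ (.inl hQU))]
      exact .inl ⟨hQU.trans_subset (subset_insert _ _), hcard⟩
    rcases hUQ.eq_or_ssubset with rfl | hssub
    · rw [if_pos heU, hempty]
      exact .inl ⟨ssubset_insert hv, card_singleton e⟩
    · have heQ := he Q hQ (.inr hssub)
      rw [if_neg heQ]
      rw [hwe.mem_cut_iff, not_and_not_right] at heQ
      exact .inr ⟨insert_subset ((heQ (mem_univ e)).1 (hUQ hw)) hUQ, hempty⟩

lemma IsHeldKarpFeasible.exists_isNarrowTree_univ (hx : H.IsHeldKarpFeasible s t x) :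
    ∃ F, H.IsNarrowTree s x univ F := by
  classical
  obtain ⟨U, ⟨F, hF⟩, hmax⟩ := (Set.toFinite {U | ∃ F, H.IsNarrowTree s x U F}).exists_maximal
    ⟨{s}, ∅, isNarrowTree_singleton⟩
  obtain rfl | hU := eq_or_ne U univ
  · exact ⟨F, hF⟩
  obtain ⟨v, hv, e, he⟩ := hx.exists_isNarrowTree_insert hF hU
  exact absurd (hmax ⟨_, he⟩ (subset_insert v U) (mem_insert_self v U)) hv

/-- A cut of weight less than `2` is narrow, hence crossed by one edge of `F`, and it separates `s`
from `t`; so it does not separate an odd part of `T`. -/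
lemma IsHeldKarpFeasible.isFractionalTJoin (hx : H.IsHeldKarpFeasible s t x) {F : Finset E}
    (hF : H.IsNarrowTree s x univ F) :
    H.IsFractionalTJoin (H.boundary F + (point s + point t)) (fun e => x e / 2) where
  nonneg e := div_nonneg (hx.nonneg e) zero_le_two
  one_le_cutWeight S hS := by
    rw [cutWeight, ← sum_div, one_le_div zero_lt_two]
    change 2 ≤ H.cutWeight x S
    have hne : S.Nonempty := nonempty_iff_ne_empty.2 (by rintro rfl; simp at hS)
    have huniv : S ≠ univ := by
      rintro rfl
      simp [sum_add_distrib, sum_univ_boundary, sum_point, CharTwo.add_self_eq_zero] at hS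
    by_contra! hlt
    have hst : ¬(s ∈ S ↔ t ∈ S) := fun hst => hlt.not_ge (hx.two_le_cutWeight S hne huniv hst)
    have hnarrow {R : Finset V} (hR : H.IsNarrow s x R) : #(H.cut F R) = 1 :=
      (hF.narrow R hR).elim And.right fun h => absurd (univ_subset_iff.1 h.1) hR.ne_univ
    have hcard : #(H.cut F S) = 1 := by
      by_cases hs : s ∈ S
      · exact hnarrow ⟨hs, huniv, hlt⟩
      · rw [← cut_compl]
        exact hnarrow ⟨mem_compl.2 hs, by simpa using hne.ne_empty, by simpa [cutWeight] using hlt⟩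
    simp only [Pi.add_apply, sum_add_distrib, sum_boundary, hcard, sum_point] at hS
    by_cases hs : s ∈ S <;> by_cases ht : t ∈ S <;> simp [hs, ht] at hS hst

lemma IsHeldKarpFeasible.exists_walk_length_le {G : SimpleGraph V}
    (hG : ∀ e, G.Adj (H.src e) (H.tgt e)) (hx : H.IsHeldKarpFeasible s t x) :
    ∃ w : G.Walk s t, (∀ v, v ∈ w.support) ∧
      (w.length : ℝ) ≤ (Fintype.card V - 1) + (∑ e, x e) / 2 := by
  classical
  obtain ⟨F, hF⟩ := hx.exists_isNarrowTree_univ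
  obtain ⟨P, -, hP⟩ := exists_boundary_eq_point_add_point (hF.reachable t (mem_univ t))
  obtain ⟨J, hJ, hcardJ⟩ := (hx.isFractionalTJoin hF).exists_boundary_eq_card_le
    (J := symmDiff F P) (by rw [boundary_symmDiff, hP])
  have hboundary : H.double.boundary (F.disjSum J) = point s + point t := by
    rw [boundary_double, hJ]
    linear_combination ZModModule.add_self (H.boundary F)
  obtain ⟨w, hlength, hw⟩ := isTraversable_of_boundary_eq (G := G) (M := F.disjSum J)
    (by rintro (e | e) -; exacts [hG e, hG e]) hboundary
  refine ⟨w, fun v => hw v ((hF.reachable v (mem_univ v)).mono (graph_le_graph_double F J)), ?_⟩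
  have hcardF : (#F + 1 : ℝ) ≤ Fintype.card V := mod_cast hF.card_lt
  have hlength' : (w.length : ℝ) ≤ #F + #J := mod_cast card_disjSum F J ▸ hlength
  rw [← sum_div] at hcardJ
  linarith

lemma sum_cutWeight_singleton_le (hx : ∀ e, 0 ≤ x e) :
    ∑ v, H.cutWeight x {v} ≤ 2 * ∑ e, x e := by
  simp only [cutWeight, cut, sum_filter, mem_singleton, mul_sum]
  rw [sum_comm]
  refine sum_le_sum fun e _ => ?_
  have hends : ∑ v, ((if H.src e = v then x e else 0) + if H.tgt e = v then x e else 0) =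
      2 * x e := by
    simp [sum_add_distrib, two_mul]
  rw [← hends]
  refine sum_le_sum fun v _ => ?_
  have := hx e
  by_cases h₁ : H.src e = v <;> by_cases h₂ : H.tgt e = v <;> simp [h₁, h₂, this]

lemma IsHeldKarpFeasible.card_sub_one_le_sum (hx : H.IsHeldKarpFeasible s t x) :
    (Fintype.card V - 1 : ℝ) ≤ ∑ e, x e := by
  rcases subsingleton_or_nontrivial V with hV | hV
  · have : (Fintype.card V : ℝ) ≤ 1 := mod_cast Fintype.card_le_one_iff_subsingleton.2 hV
    linarith [sum_nonneg fun e (_ : e ∈ univ) => hx.nonneg e]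
  · have hdegree := sum_le_sum fun v (_ : v ∈ univ) =>
      hx.le_cutWeight (singleton_nonempty v) (singleton_ne_univ v)
    have := hdegree.trans (sum_cutWeight_singleton_le hx.nonneg)
    simp only [mem_singleton, sum_sub_distrib, sum_const, card_univ, nsmul_eq_mul, sum_ite_eq,
      mem_univ, if_true] at this
    linarith

end HeldKarp

section OfSimpleGraph

variable {V : Type*} (G : SimpleGraph V)

/-- A simple graph as a multigraph, with the orientation of its edges given by `Quot.out`. -/
noncomputable def ofSimpleGraph : Multigraph V G.edgeSet where
  src e := e.1.out.1
  tgt e := e.1.out.2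

variable {G}

lemma mk_src_tgt_ofSimpleGraph (e : G.edgeSet) :
    s((ofSimpleGraph G).src e, (ofSimpleGraph G).tgt e) = e := Quot.out_eq e.1

lemma adj_src_tgt_ofSimpleGraph (e : G.edgeSet) :
    G.Adj ((ofSimpleGraph G).src e) ((ofSimpleGraph G).tgt e) := by
  rw [← mem_edgeSet, mk_src_tgt_ofSimpleGraph]
  exact e.2

lemma mem_cut_ofSimpleGraph [DecidableEq V] [Fintype G.edgeSet] {S : Finset V} {e : G.edgeSet} :
    e ∈ (ofSimpleGraph G).cut univ S ↔ ∃ a b, e.1 = s(a, b) ∧ a ∈ S ∧ b ∉ S := by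
  simp only [mem_cut, mem_univ, true_and, ← mk_src_tgt_ofSimpleGraph e, Sym2.eq_iff]
  grind

end OfSimpleGraph

end Multigraph

section SimpleGraph

open Multigraph

variable {V : Type*} {G : SimpleGraph V} {s t : V}

lemma hkValue_eq_sum [Fintype G.edgeSet] (x : Sym2 V → ℝ) :
    hkValue G x = ∑ e : G.edgeSet, x e := by
  rw [hkValue, finsum_mem_eq_toFinset_sum]
  exact Finset.sum_subtype _ (fun _ => Set.mem_toFinset) x

lemma hkCut_eq_cutWeight [DecidableEq V] [Fintype G.edgeSet] (x : Sym2 V → ℝ) (S : Finset V) :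
    hkCut G x S = (ofSimpleGraph G).cutWeight (fun e => x e) S := by
  rw [hkCut, cutWeight, ← finsum_mem_coe_finset,
    ← finsum_mem_image (f := x) Subtype.val_injective.injOn]
  refine finsum_mem_congr (Set.ext fun e => ?_) fun _ _ => rfl
  constructor
  · exact fun ⟨he, hab⟩ => ⟨⟨e, he⟩, mem_cut_ofSimpleGraph.2 hab, rfl⟩
  · rintro ⟨e, he, rfl⟩
    exact ⟨e.2, mem_cut_ofSimpleGraph.1 he⟩

lemma HKPathFeasible.isHeldKarpFeasible_ofSimpleGraph [Fintype V] [DecidableEq V]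
    [Fintype G.edgeSet] {x : Sym2 V → ℝ} (hx : HKPathFeasible G s t x) :
    (ofSimpleGraph G).IsHeldKarpFeasible s t fun e => x e where
  nonneg e := hx.1 e
  two_le_cutWeight S hS hS' hst := by
    rw [← hkCut_eq_cutWeight]
    exact (hx.2 S hS (by simpa using hS')).1 hst
  one_le_cutWeight S hS hS' hst := by
    rw [← hkCut_eq_cutWeight]
    exact (hx.2 S hS (by simpa using hS')).2 hst

lemma hkPathFeasible_const_two [Finite V] (hG : G.Connected) (s t : V) :
    HKPathFeasible G s t fun _ => 2 := by
  have hcut (S : Set V) (hS : S.Nonempty) (hS' : S ≠ Set.univ) : 2 ≤ hkCut G (fun _ => 2) S := by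
    obtain ⟨u, hu⟩ := hS
    obtain ⟨v, hv⟩ := (Set.ne_univ_iff_exists_notMem S).1 hS'
    obtain ⟨w⟩ := hG.preconnected u v
    obtain ⟨d, -, hfst, hsnd⟩ := w.exists_boundary_dart S hu hv
    rw [hkCut, finsum_mem_eq_finite_toFinset_sum _ (Set.toFinite _)]
    exact Finset.single_le_sum (f := fun _ => (2 : ℝ)) (fun _ _ => zero_le_two)
      ((Set.Finite.mem_toFinset _).2 ⟨d.edge_mem, d.fst, d.snd, rfl, hfst, hsnd⟩)
  exact ⟨fun _ => zero_le_two, fun S hS hS' =>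
    ⟨fun _ => hcut S hS hS', fun _ => one_le_two.trans (hcut S hS hS')⟩⟩

lemma HKPathFeasible.hkValue_nonneg {x : Sym2 V → ℝ} (hx : HKPathFeasible G s t x) :
    0 ≤ hkValue G x := finsum_nonneg fun e => finsum_nonneg fun _ => hx.1 e

lemma HKPathFeasible.exists_walk_length_le [Finite V] {x : Sym2 V → ℝ}
    (hx : HKPathFeasible G s t x) :
    ∃ w : G.Walk s t, (∀ v, v ∈ w.support) ∧ (w.length : ℝ) ≤ 3 / 2 * hkValue G x := by
  classical
  cases nonempty_fintype V
  have hx' := hx.isHeldKarpFeasible_ofSimpleGraph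
  obtain ⟨w, hw, hlength⟩ := hx'.exists_walk_length_le adj_src_tgt_ofSimpleGraph
  refine ⟨w, hw, ?_⟩
  rw [hkValue_eq_sum]
  linarith [hx'.card_sub_one_le_sum]

theorem spanning_path_walk_le_heldKarpPath_blockwise_subcubic_general {V : Type*} [Fintype V]
    (G : SimpleGraph V) (hG : G.Connected) (s t : V) :
    ∃ w : G.Walk s t, (∀ u, u ∈ w.support) ∧ (w.length : ℝ) ≤ 3 / 2 * OLPpath G s t := by
  have htwo := hkPathFeasible_const_two hG s t
  obtain ⟨w₀, hw₀, -⟩ := htwo.exists_walk_length_le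
  obtain ⟨w, hw, hmin⟩ := exists_minimalFor_of_wellFoundedLT
    (fun w : G.Walk s t => ∀ u, u ∈ w.support) Walk.length ⟨w₀, hw₀⟩
  refine ⟨w, hw, ?_⟩
  suffices 2 / 3 * (w.length : ℝ) ≤ OLPpath G s t by linarith
  refine le_csInf ⟨_, _, htwo, rfl⟩ ?_
  rintro _ ⟨x, hx, rfl⟩
  obtain ⟨w', hw', hlength⟩ := hx.exists_walk_length_le
  have hle : (w.length : ℝ) ≤ w'.length := mod_cast (le_total _ _).elim id (hmin hw')
  linarith

end SimpleGraph

/-- For every `ε > 0` there is an `N` such that every connected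
simple graph on at least `N` vertices all of whose blocks have maximum degree at
most 3 admits, for all vertices `s, t`, a spanning walk from `s` to `t` of length
at most `(3/2 + ε) · OLP(G, s, t)`. -/
theorem spanning_path_walk_le_heldKarpPath_blockwise_subcubic :
    ∀ ε : ℝ, 0 < ε → ∃ N : ℕ,
      ∀ (V : Type) [Fintype V] (G : SimpleGraph V),
        N ≤ Fintype.card V → G.Connected →
        (∀ B : Set V, IsBlock G B → ∀ v ∈ B, {u | u ∈ B ∧ G.Adj v u}.ncard ≤ 3) →
        ∀ s t : V,
          ∃ w : G.Walk s t, (∀ u : V, u ∈ w.support) ∧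
            (w.length : ℝ) ≤ (3 / 2 + ε) * OLPpath G s t := by
  refine fun ε hε => ⟨0, fun V _ G _ hG _ s t => ?_⟩
  obtain ⟨w, hw, hlength⟩ := spanning_path_walk_le_heldKarpPath_blockwise_subcubic_general G hG s t
  have hOLP : 0 ≤ OLPpath G s t := Real.sInf_nonneg fun _ ⟨_, hx, hy⟩ => hy ▸ hx.hkValue_nonneg
  exact ⟨w, hw, hlength.trans (by gcongr; linarith)⟩
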